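/- arXiv:0906.3657 — 2 statements merged into one kernel-verified Lean document; each statement's English description precedes it below -/
import Mathlib

section
/- Let b>0 and let G=(V,E) be a finite graph whose Cheeger constant is strictly greater than b. If p > 1/(1+b), then there is some δ>0, depending only on b and on p − 1/(1+b), such that for every vertex v∈V: μ_p(|C(v)| ≥ |V|/2) ≥ δ, where C(v) denotes the connected component of v in the random configuration. -/
open Filter

noncomputable section

/-- The spanning subgraph of `G` determined by the configuration `x : {0,1}^E`:
an edge of `G` is retained iff its coordinate equals `true`. -/
def percoGraph {V : Type*} (G : SimpleGraph V) (x : G.edgeSet → Bool) : SimpleGraph V :=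
  SimpleGraph.fromEdgeSet {e : Sym2 V | ∃ h : e ∈ G.edgeSet, x ⟨e, h⟩ = true}

/-- The vertex set of the connected component of `v` in the configuration `x`. -/
def percoComp {V : Type*} (G : SimpleGraph V) (x : G.edgeSet → Bool) (v : V) : Set V :=
  {u | (percoGraph G x).Reachable v u}

/-- The number of vertices of the connected component of `v` in the configuration `x`. -/
def compSize {V : Type*} (G : SimpleGraph V) (x : G.edgeSet → Bool) (v : V) : ℕ :=
  (percoComp G x v).ncard

/-- `L⁽¹⁾`: the number of vertices of the largest connected component of the configuration. -/
def largestComp {V : Type*} (G : SimpleGraph V) (x : G.edgeSet → Bool) : ℕ :=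
  sSup (Set.range (compSize G x))

/-- The probability of a single configuration under the product Bernoulli(p) measure. -/
def configProb {E : Type*} (p : ℝ) (x : E → Bool) : ℝ :=
  ∏ᶠ e : E, if x e then p else 1 - p

/-- The product Bernoulli(p) probability of a set of configurations. -/
def probC {E : Type*} (p : ℝ) (A : Set (E → Bool)) : ℝ :=
  ∑ᶠ x ∈ A, configProb p x

/-- Expectation under the product Bernoulli(p) measure. -/
def expC {E : Type*} (p : ℝ) (f : (E → Bool) → ℝ) : ℝ :=
  ∑ᶠ x : E → Bool, configProb p x * f x

/-- Variance under the product Bernoulli(p) measure. -/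
def varC {E : Type*} (p : ℝ) (f : (E → Bool) → ℝ) : ℝ :=
  expC p (fun x => f x ^ 2) - (expC p f) ^ 2

open Classical in
/-- The configuration `x` with coordinate `e` set to `b`. -/
def setEdge {E : Type*} (x : E → Bool) (e : E) (b : Bool) : E → Bool :=
  fun e' => if e' = e then b else x e'

/-- The operator `Δ_{e,p} f (x) = f(x) - ∫ f(x) dx(e)`. -/
def deltaE {E : Type*} (p : ℝ) (f : (E → Bool) → ℝ) (e : E) (x : E → Bool) : ℝ :=
  f x - (p * f (setEdge x e true) + (1 - p) * f (setEdge x e false))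

/-- The norm `‖g‖_{1,p}`. -/
def norm1 {E : Type*} (p : ℝ) (g : (E → Bool) → ℝ) : ℝ :=
  expC p fun x => |g x|

/-- The squared norm `‖g‖_{2,p}²`. -/
def sqNorm2 {E : Type*} (p : ℝ) (g : (E → Bool) → ℝ) : ℝ :=
  expC p fun x => g x ^ 2

/-- `|E(S, Sᶜ)|`: the number of edges of `G` with one endpoint in `S` and the other outside `S`
(counted via the ordered pair whose first coordinate lies in `S`). -/
def edgeBoundaryCard {V : Type*} (G : SimpleGraph V) (S : Set V) : ℕ :=
  {q : V × V | G.Adj q.1 q.2 ∧ q.1 ∈ S ∧ q.2 ∉ S}.ncard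

/-- The maximal degree of `G` is at most `d`. -/
def DegreeLE {V : Type*} (G : SimpleGraph V) (d : ℕ) : Prop :=
  ∀ v, {u | G.Adj v u}.ncard ≤ d

/-- The Cheeger (edge-isoperimetric) constant of `G` is strictly greater than `b`. -/
def CheegerGT {V : Type*} (G : SimpleGraph V) (b : ℝ) : Prop :=
  ∀ S : Set V, 0 < S.ncard → 2 * S.ncard ≤ Nat.card V →
    b * (S.ncard : ℝ) < (edgeBoundaryCard G S : ℝ)

/-- A `(b,d)`-expander: a sequence of finite graphs with `|V_n| → ∞`, maximal degree at most `d`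
and Cheeger constant greater than `b`. -/
structure ExpanderSeq (b : ℝ) (d : ℕ) where
  V : ℕ → Type
  finV : ∀ n, Finite (V n)
  G : ∀ n, SimpleGraph (V n)
  card_tendsto : Tendsto (fun n => Nat.card (V n)) atTop atTop
  degree_le : ∀ n, DegreeLE (G n) d
  cheeger_gt : ∀ n, CheegerGT (G n) b

lemma aux_lambda (b p : ℝ) (h : 1 - p - p * b < 0) :
    ∃ l : ℝ, 0 < l ∧ p * Real.exp (-l * b) + (1 - p) * Real.exp l ≤ 1 := by
  have hd : HasDerivAt (fun l : ℝ => p * Real.exp (-l * b) + (1 - p) * Real.exp l)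
      (1 - p - p * b) 0 := by
    have h1 : HasDerivAt (fun l : ℝ => -l * b) (-1 * b) 0 :=
      ((hasDerivAt_id (0 : ℝ)).neg).mul_const b
    have h2 := (h1.exp.const_mul p).add ((Real.hasDerivAt_exp 0).const_mul (1 - p))
    refine h2.congr_deriv ?_
    rw [neg_zero, zero_mul, Real.exp_zero]
    ring
  have ht := hasDerivAt_iff_tendsto_slope.1 hd
  have ht2 : Filter.Tendsto (slope (fun l : ℝ => p * Real.exp (-l * b) + (1 - p) * Real.exp l) 0)
      (nhdsWithin 0 (Set.Ioi 0)) (nhds (1 - p - p * b)) :=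
    ht.mono_left (nhdsWithin_mono _ (fun x hx => ne_of_gt hx))
  have he := ht2.eventually (gt_mem_nhds h)
  obtain ⟨l, hl, hl0⟩ := (he.and self_mem_nhdsWithin).exists
  have hl0 : (0 : ℝ) < l := hl0
  refine ⟨l, hl0, ?_⟩
  rw [slope_def_field] at hl
  simp only [sub_zero, neg_zero, zero_mul, Real.exp_zero] at hl
  rw [div_lt_iff₀ hl0] at hl
  linarith

lemma configProb_eq {E : Type*} [Fintype E] (p : ℝ) (x : E → Bool) :
    configProb p x = ∏ e : E, if x e then p else 1 - p :=
  finprod_eq_prod_of_fintype _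

lemma configProb_nonneg {E : Type*} [Fintype E] (p : ℝ) (h0 : 0 ≤ p) (h1 : p ≤ 1)
    (x : E → Bool) : 0 ≤ configProb p x := by
  rw [configProb_eq]
  refine Finset.prod_nonneg fun e _ => ?_
  split_ifs <;> linarith

lemma sum_configProb {E : Type*} [Fintype E] [DecidableEq E] (p : ℝ) :
    ∑ x : E → Bool, configProb p x = 1 := by
  simp only [configProb_eq]
  have := (Finset.prod_univ_sum (fun _ : E => (Finset.univ : Finset Bool))
    (fun _ c => if c then p else 1 - p)).symm
  rw [Fintype.piFinset_univ] at this
  rw [this]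
  simp

lemma sum_split {E : Type*} [Fintype E] [DecidableEq E] (p : ℝ) (e : E) (f : (E → Bool) → ℝ) :
    ∑ x, configProb p x * f x =
      p * ∑ x, configProb p x * f (Function.update x e true) +
      (1 - p) * ∑ x, configProb p x * f (Function.update x e false) := by
  have key : ∀ g : (E → Bool) → ℝ, ∑ x, configProb p x * g x =
      ∑ y : {j // j ≠ e} → Bool, ∑ c : Bool, (if c then p else 1 - p) *
        (∏ j, if y j then p else 1 - p) * g ((Equiv.funSplitAt e Bool).symm (c, y)) := by
    intro g
    rw [← (Equiv.funSplitAt e Bool).symm.sum_comp, Fintype.sum_prod_type_right]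
    refine Finset.sum_congr rfl fun y _ => Finset.sum_congr rfl fun c _ => ?_
    congr 1
    rw [configProb_eq, Fintype.prod_eq_mul_prod_subtype_ne _ e]
    congr 1
    · simp [Equiv.funSplitAt]
    · refine Finset.prod_congr rfl fun j _ => ?_
      simp [Equiv.funSplitAt, j.2]
  have hu : ∀ (c d : Bool) (y : {j // j ≠ e} → Bool),
      Function.update ((Equiv.funSplitAt e Bool).symm (c, y)) e d =
        (Equiv.funSplitAt e Bool).symm (d, y) := by
    intro c d y
    ext j
    by_cases hj : j = e
    · subst hj; simp [Equiv.funSplitAt]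
    · simp [Equiv.funSplitAt, hj]
  rw [key, key, key, Finset.mul_sum, Finset.mul_sum, ← Finset.sum_add_distrib]
  refine Finset.sum_congr rfl fun y _ => ?_
  simp only [hu, Fintype.sum_bool]
  simp
  ring

/-- Open subgraph avoiding the edges of `F`. -/
def openAvoid {V : Type*} (G : SimpleGraph V) (F : Finset G.edgeSet) (x : G.edgeSet → Bool) :
    SimpleGraph V :=
  SimpleGraph.fromEdgeSet {e : Sym2 V | ∃ h : e ∈ G.edgeSet, x ⟨e, h⟩ = true ∧ ⟨e, h⟩ ∉ F}

/-- Vertices reachable from `A` by open edges outside `F`. -/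
def reachSet {V : Type*} (G : SimpleGraph V) (A : Set V) (F : Finset G.edgeSet)
    (x : G.edgeSet → Bool) : Set V :=
  {u | ∃ a ∈ A, (openAvoid G F x).Reachable a u}

lemma reach_open {V : Type*} (G : SimpleGraph V) [DecidableEq G.edgeSet] (A : Set V) (F : Finset G.edgeSet)
    (x : G.edgeSet → Bool) (a w : V) (ha : a ∈ A) (h : G.Adj a w)
    (hF : (⟨s(a, w), h⟩ : G.edgeSet) ∉ F) :
    reachSet G (insert w A) F x ⊆ reachSet G A F (Function.update x ⟨s(a, w), h⟩ true) := by
  have hle : openAvoid G F x ≤ openAvoid G F (Function.update x ⟨s(a, w), h⟩ true) := by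
    apply SimpleGraph.fromEdgeSet_mono
    rintro e ⟨he, hx, hn⟩
    refine ⟨he, ?_, hn⟩
    by_cases hee : (⟨e, he⟩ : G.edgeSet) = ⟨s(a, w), h⟩
    · rw [hee]; simp
    · rw [Function.update_of_ne hee]; exact hx
  rintro u ⟨c, hc, hr⟩
  have hr' := hr.mono hle
  rcases hc with rfl | hc
  · refine ⟨a, ha, SimpleGraph.Reachable.trans (SimpleGraph.Adj.reachable ?_) hr'⟩
    rw [openAvoid, SimpleGraph.fromEdgeSet_adj]
    exact ⟨⟨h, by simp, hF⟩, h.ne⟩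
  · exact ⟨c, hc, hr'⟩

lemma reach_closed {V : Type*} (G : SimpleGraph V) [DecidableEq G.edgeSet] (A : Set V) (F : Finset G.edgeSet)
    (x : G.edgeSet → Bool) (e : G.edgeSet) :
    reachSet G A (insert e F) x ⊆ reachSet G A F (Function.update x e false) := by
  have hle : openAvoid G (insert e F) x ≤ openAvoid G F (Function.update x e false) := by
    apply SimpleGraph.fromEdgeSet_mono
    rintro e' ⟨he, hx, hn⟩
    rw [Finset.mem_insert, not_or] at hn
    refine ⟨he, ?_, hn.2⟩
    rw [Function.update_of_ne hn.1]; exact hx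
  rintro u ⟨c, hc, hr⟩
  exact ⟨c, hc, hr.mono hle⟩

open Classical in
/-- Probability that the set reachable from `A` outside `F` is small. -/
def smallProb {V : Type*} (G : SimpleGraph V) [Fintype G.edgeSet] (p : ℝ) (A : Set V)
    (F : Finset G.edgeSet) : ℝ :=
  ∑ x : G.edgeSet → Bool, configProb p x *
    (if 2 * (reachSet G A F x).ncard < Nat.card V then 1 else 0)

open Classical in
lemma ite_mono_of {V : Type*} [Finite V] {S T : Set V} (h : S ⊆ T) :
    (if 2 * T.ncard < Nat.card V then (1 : ℝ) else 0) ≤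
      if 2 * S.ncard < Nat.card V then 1 else 0 := by
  have := Set.ncard_le_ncard h (Set.toFinite T)
  split_ifs with h1 h2
  · exact le_rfl
  · omega
  · norm_num
  · exact le_rfl

open Classical in
lemma smallProb_le_one {V : Type*} (G : SimpleGraph V) [Fintype G.edgeSet] (p : ℝ)
    (h0 : 0 ≤ p) (h1 : p ≤ 1) (A : Set V) (F : Finset G.edgeSet) : smallProb G p A F ≤ 1 := by
  unfold smallProb
  refine le_trans (Finset.sum_le_sum fun x _ => ?_) (sum_configProb (E := G.edgeSet) p).le
  have := configProb_nonneg p h0 h1 x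
  split_ifs
  · rw [mul_one]
  · rw [mul_zero]; exact this

open Classical in
lemma smallProb_step {V : Type*} [Finite V] (G : SimpleGraph V) [Fintype G.edgeSet] (p : ℝ)
    (h0 : 0 ≤ p) (h1 : p ≤ 1) (A : Set V) (F : Finset G.edgeSet)
    (a w : V) (ha : a ∈ A) (h : G.Adj a w) (hF : (⟨s(a, w), h⟩ : G.edgeSet) ∉ F) :
    smallProb G p A F ≤ p * smallProb G p (insert w A) F +
      (1 - p) * smallProb G p A (insert ⟨s(a, w), h⟩ F) := by
  unfold smallProb
  refine (sum_split p (⟨s(a, w), h⟩ : G.edgeSet) (fun x =>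
    if 2 * (reachSet G A F x).ncard < Nat.card V then (1 : ℝ) else 0)).le.trans ?_
  refine add_le_add (mul_le_mul_of_nonneg_left (Finset.sum_le_sum fun x _ => ?_) h0)
    (mul_le_mul_of_nonneg_left (Finset.sum_le_sum fun x _ => ?_) (by linarith))
  · exact mul_le_mul_of_nonneg_left (ite_mono_of (reach_open G A F x a w ha h hF))
      (configProb_nonneg p h0 h1 x)
  · exact mul_le_mul_of_nonneg_left (ite_mono_of (reach_closed G A F x _))
      (configProb_nonneg p h0 h1 x)

open Classical in
lemma boundary_le {V : Type*} [Finite V] (G : SimpleGraph V) (A : Set V) (F : Finset G.edgeSet)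
    (hF : ∀ a ∈ A, ∀ w, w ∉ A → ∀ h : G.Adj a w, (⟨s(a, w), h⟩ : G.edgeSet) ∈ F) :
    edgeBoundaryCard G A ≤ F.card := by
  unfold edgeBoundaryCard
  rw [← Finset.card_image_of_injective F Subtype.val_injective, ← Set.ncard_coe_finset]
  refine Set.ncard_le_ncard_of_injOn (fun q => s(q.1, q.2)) ?_ ?_ (Set.toFinite _)
  · rintro ⟨a, w⟩ ⟨h, ha, hw⟩
    simp only [Finset.coe_image, Set.mem_image, Finset.mem_coe]
    exact ⟨_, hF a ha w hw h, rfl⟩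
  · rintro ⟨a, w⟩ ⟨h, ha, hw⟩ ⟨a', w'⟩ ⟨h', ha', hw'⟩ heq
    simp only [Sym2.eq_iff] at heq
    simp only at ha hw ha' hw'
    rcases heq with ⟨rfl, rfl⟩ | ⟨rfl, rfl⟩
    · rfl
    · exact absurd ha hw'

open Classical in
lemma smallProb_bound {V : Type*} [Finite V] (G : SimpleGraph V) [Fintype G.edgeSet]
    (b p l : ℝ) (hG : CheegerGT G b) (h0 : 0 ≤ p) (h1 : p ≤ 1) (hl : 0 < l)
    (hpl : p * Real.exp (-l * b) + (1 - p) * Real.exp l ≤ 1) (m : ℕ) :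
    ∀ (A : Set V) (F : Finset G.edgeSet), A.Nonempty →
      (Nat.card V - A.ncard) + (Fintype.card G.edgeSet - F.card) ≤ m →
      smallProb G p A F ≤ Real.exp (-l * (b * A.ncard - F.card)) := by
  induction m with
  | zero =>
    intro A F hA hm
    have hc : Nat.card V ≤ A.ncard := by omega
    have hz : smallProb G p A F = 0 := by
      refine Finset.sum_eq_zero fun x _ => ?_
      have hs : A ⊆ reachSet G A F x := fun a ha => ⟨a, ha, SimpleGraph.Reachable.refl _⟩
      have := Set.ncard_le_ncard hs (Set.toFinite _)
      rw [if_neg (by omega), mul_zero]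
    rw [hz]; positivity
  | succ m ih =>
    intro A F hA hm
    by_cases hbig : Nat.card V ≤ 2 * A.ncard
    · have hz : smallProb G p A F = 0 := by
        refine Finset.sum_eq_zero fun x _ => ?_
        have hs : A ⊆ reachSet G A F x := fun a ha => ⟨a, ha, SimpleGraph.Reachable.refl _⟩
        have := Set.ncard_le_ncard hs (Set.toFinite _)
        rw [if_neg (by omega), mul_zero]
      rw [hz]; positivity
    · by_cases hF : ∀ a ∈ A, ∀ w, w ∉ A → ∀ h : G.Adj a w, (⟨s(a, w), h⟩ : G.edgeSet) ∈ F
      · have hbd := boundary_le G A F hF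
        have hch := hG A ((Set.ncard_pos (Set.toFinite A)).2 hA) (by omega)
        have hbd' : (edgeBoundaryCard G A : ℝ) ≤ F.card := by exact_mod_cast hbd
        refine (smallProb_le_one G p h0 h1 A F).trans (Real.one_le_exp ?_)
        nlinarith
      · push Not at hF
        obtain ⟨a, ha, w, hw, h, hF⟩ := hF
        have hstep := smallProb_step G p h0 h1 A F a w ha h hF
        have hcA : (insert w A).ncard = A.ncard + 1 :=
          Set.ncard_insert_of_notMem hw (Set.toFinite A)
        have hcF : (insert (⟨s(a, w), h⟩ : G.edgeSet) F).card = F.card + 1 :=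
          Finset.card_insert_of_notMem hF
        have hFle : (insert (⟨s(a, w), h⟩ : G.edgeSet) F).card ≤ Fintype.card G.edgeSet :=
          Finset.card_le_univ _
        have i1 := ih (insert w A) F (Set.insert_nonempty _ _) (by omega)
        have i2 := ih A (insert ⟨s(a, w), h⟩ F) hA (by omega)
        rw [hcA] at i1
        rw [hcF] at i2
        have e1 : Real.exp (-l * (b * ((A.ncard + 1 : ℕ) : ℝ) - F.card)) =
            Real.exp (-l * (b * A.ncard - F.card)) * Real.exp (-l * b) := by
          rw [← Real.exp_add]; push_cast; ring_nf
        have e2 : Real.exp (-l * (b * A.ncard - ((F.card + 1 : ℕ) : ℝ))) =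
            Real.exp (-l * (b * A.ncard - F.card)) * Real.exp l := by
          rw [← Real.exp_add]; push_cast; ring_nf
        rw [e1] at i1
        rw [e2] at i2
        have hE := Real.exp_pos (-l * (b * A.ncard - F.card))
        have j1 := mul_le_mul_of_nonneg_left i1 h0
        have j2 := mul_le_mul_of_nonneg_left i2 (sub_nonneg.2 h1)
        have j3 := mul_le_mul_of_nonneg_left hpl hE.le
        nlinarith

/-- if the Cheeger constant of `G` is greater than `b` and `p > 1/(1+b)`, then
for every vertex `v`, `μ_p(|C(v)| ≥ |V|/2) ≥ δ`, where `δ > 0` depends only on `b` and on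
the gap `p - 1/(1+b)`. -/
theorem stmt4 (b : ℝ) (hb : 0 < b) :
    ∃ δ : ℝ → ℝ, (∀ s : ℝ, 0 < s → 0 < δ s) ∧
      ∀ (V : Type) (_ : Finite V) (G : SimpleGraph V), CheegerGT G b →
        ∀ p : ℝ, 1 / (1 + b) < p → p ≤ 1 →
          ∀ v : V,
            δ (p - 1 / (1 + b)) ≤
              probC p {x : G.edgeSet → Bool |
                (Nat.card V : ℝ) / 2 ≤ (compSize G x v : ℝ)} := by
  classical
  have hex : ∀ s : ℝ, ∃ l : ℝ, 0 < s → 0 < l ∧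
      (s + 1 / (1 + b)) * Real.exp (-l * b) + (1 - (s + 1 / (1 + b))) * Real.exp l ≤ 1 := by
    intro s
    by_cases hs : 0 < s
    · have hneg : 1 - (s + 1 / (1 + b)) - (s + 1 / (1 + b)) * b < 0 := by
        have h : (s + 1 / (1 + b)) * (1 + b) = s * (1 + b) + 1 := by field_simp
        nlinarith
      obtain ⟨l, hl⟩ := aux_lambda b _ hneg
      exact ⟨l, fun _ => hl⟩
    · exact ⟨0, fun h => absurd h hs⟩
  choose L hL using hex
  refine ⟨fun s => 1 - Real.exp (-L s * b), ?_, ?_⟩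
  · intro s hs
    have := (hL s hs).1
    have : Real.exp (-L s * b) < 1 := by
      rw [← Real.exp_zero]; exact Real.exp_lt_exp.2 (by nlinarith)
    linarith
  · intro V _ G hG p hp hp1 v
    have hp0 : 0 ≤ p := le_trans (by positivity) hp.le
    have : Fintype G.edgeSet := Fintype.ofFinite _
    obtain ⟨hl, hpl⟩ := hL (p - 1 / (1 + b)) (sub_pos.2 hp)
    rw [sub_add_cancel] at hpl
    have hb := smallProb_bound G b p _ hG hp0 hp1 hl hpl _ {v} ∅ (Set.singleton_nonempty v) le_rfl
    simp only [Set.ncard_singleton, Finset.card_empty, Nat.cast_one, Nat.cast_zero, mul_one,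
      sub_zero] at hb
    have hsum : 1 ≤ probC p {x : G.edgeSet → Bool |
        (Nat.card V : ℝ) / 2 ≤ (compSize G x v : ℝ)} + smallProb G p {v} ∅ := by
      rw [← sum_configProb (E := G.edgeSet) p]
      have hpe : probC p {x : G.edgeSet → Bool |
          (Nat.card V : ℝ) / 2 ≤ (compSize G x v : ℝ)} = ∑ x : G.edgeSet → Bool,
          if (Nat.card V : ℝ) / 2 ≤ (compSize G x v : ℝ) then configProb p x else 0 := by
        rw [probC, finsum_mem_def, finsum_eq_sum_of_fintype]
        rfl
      rw [hpe]
      unfold smallProb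
      rw [← Finset.sum_add_distrib]
      refine Finset.sum_le_sum fun x _ => ?_
      have hx := configProb_nonneg p hp0 hp1 x
      have hsub : reachSet G {v} ∅ x ⊆ percoComp G x v := by
        rintro u ⟨a, rfl, hr⟩
        refine SimpleGraph.Reachable.mono ?_ hr
        apply SimpleGraph.fromEdgeSet_mono
        rintro e ⟨he, hxe, _⟩
        exact ⟨he, hxe⟩
      have hle : (reachSet G {v} ∅ x).ncard ≤ compSize G x v :=
        Set.ncard_le_ncard hsub (Set.toFinite _)
      split_ifs with c1 c2 c2
      · linarith
      · linarith
      · linarith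
      · exfalso
        apply c1
        have : Nat.card V ≤ 2 * compSize G x v := by omega
        have : (Nat.card V : ℝ) ≤ 2 * compSize G x v := by exact_mod_cast this
        linarith
    simp only
    linarith
end
end

section
/- Let b>0, d∈ℕ and let (G_n)_{n≥0} be a (b,d)-expander. There are constants p_0(b)<1, a(b)>0, and C(b,d)>0 such that for every p ≥ p_0 and every n sufficiently large: μ_{n,p}(L_n^{(1)} ≥ a·|V_n|) ≥ 1 − exp(−C·|V_n|/log|V_n|). -/
open Filter

noncomputable section

theorem sum_biUnion_le_aux {ι α : Type*} [DecidableEq ι] [DecidableEq α] (w : α → ℝ)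
    (hw : ∀ x, 0 ≤ w x) (T : Finset ι) (f : ι → Finset α) :
    ∑ x ∈ T.biUnion f, w x ≤ ∑ A ∈ T, ∑ x ∈ f A, w x := by
  induction T using Finset.induction_on with
  | empty => simp
  | insert a s ha ih =>
    rw [Finset.biUnion_insert, Finset.sum_insert ha]
    have h1 := Finset.sum_union_inter (s₁ := f a) (s₂ := s.biUnion f) (f := w)
    have h2 : 0 ≤ ∑ x ∈ f a ∩ s.biUnion f, w x := Finset.sum_nonneg fun x _ => hw x
    linarith

theorem sum_closed {E : Type*} [Fintype E] [DecidableEq E] (p : ℝ) (F : Finset E) :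
    ∑ x ∈ Fintype.piFinset (fun e => if e ∈ F then ({false} : Finset Bool) else Finset.univ),
      (∏ e, if x e then p else 1 - p) = (1 - p) ^ F.card := by
  rw [← Finset.prod_univ_sum (fun e => if e ∈ F then ({false} : Finset Bool) else Finset.univ)
    (fun _ j => if j then p else 1 - p)]
  have : ∀ e : E, (∑ j ∈ (if e ∈ F then ({false} : Finset Bool) else Finset.univ),
      (if j then p else 1 - p)) = if e ∈ F then 1 - p else 1 := by
    intro e
    split_ifs <;> simp
  rw [Finset.prod_congr rfl (fun e _ => this e), Finset.prod_ite_mem]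
  simp

theorem probC_eq {E : Type*} [Fintype E] [DecidableEq E] (p : ℝ) (A : Set (E → Bool))
    [DecidablePred (· ∈ A)] :
    probC p A = ∑ x with x ∈ A, (∏ e, if x e then p else 1 - p) := by
  unfold probC configProb
  rw [finsum_mem_eq_sum_of_inter_support_eq (t := Finset.univ.filter (· ∈ A))]
  · exact Finset.sum_congr rfl fun x _ => finprod_eq_prod_of_fintype _
  · ext x
    simp

open Classical in
def cutEdges {V : Type*} [Fintype V] (G : SimpleGraph V) (A : Finset V) : Finset G.edgeSet :=
  Finset.univ.filter fun e => ∃ u v, u ∈ A ∧ v ∉ A ∧ e.1 = s(u, v)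

theorem cutEdges_card {V : Type*} [Fintype V] (G : SimpleGraph V) (A : Finset V) :
    edgeBoundaryCard G (A : Set V) ≤ (cutEdges G A).card := by
  classical
  unfold edgeBoundaryCard
  rw [← Set.ncard_coe_finset, ← Set.ncard_image_of_injective (cutEdges G A : Set G.edgeSet)
    Subtype.val_injective]
  refine Set.ncard_le_ncard_of_injOn (fun q : V × V => s(q.1, q.2)) ?_ ?_ (Set.toFinite _)
  · rintro ⟨u, v⟩ ⟨h, hu, hv⟩
    refine ⟨⟨s(u, v), h⟩, ?_, rfl⟩
    simp only [cutEdges, Finset.coe_filter, Finset.mem_univ, true_and, Set.mem_ofPred_eq]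
    exact ⟨u, v, by simpa using hu, by simpa using hv, rfl⟩
  · rintro ⟨u, v⟩ ⟨_, hu, hv⟩ ⟨u', v'⟩ ⟨_, hu', hv'⟩ h
    simp only [Sym2.eq_iff] at h
    rcases h with ⟨rfl, rfl⟩ | ⟨rfl, rfl⟩
    · rfl
    · exact absurd hu hv'

theorem exists_cut {V : Type*} [Fintype V] [Nonempty V] (G : SimpleGraph V) (x : G.edgeSet → Bool)
    (h : (largestComp G x : ℝ) < 1 / 4 * (Fintype.card V : ℝ)) :
    ∃ A : Finset V, 2 * A.card ≤ Fintype.card V ∧ Fintype.card V < 4 * A.card ∧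
      ∀ e ∈ cutEdges G A, x e = false := by
  classical
  have hcomp : ∀ v, 4 * compSize G x v < Fintype.card V := by
    intro v
    have h1 : compSize G x v ≤ largestComp G x :=
      le_csSup (Set.finite_range _).bddAbove ⟨v, rfl⟩
    have h2 : (compSize G x v : ℝ) ≤ largestComp G x := by exact_mod_cast h1
    have : (4 * compSize G x v : ℝ) < Fintype.card V := by linarith
    exact_mod_cast this
  let S : Finset (Finset V) := Finset.univ.filter fun A => 2 * A.card ≤ Fintype.card V ∧
    ∀ u v, (percoGraph G x).Adj u v → u ∈ A → v ∈ A
  obtain ⟨A, hA, hmax⟩ := S.exists_max_image Finset.card ⟨∅, by simp [S]⟩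
  simp only [S, Finset.mem_filter, Finset.mem_univ, true_and] at hA hmax
  refine ⟨A, hA.1, ?_, ?_⟩
  · have hn : 0 < Fintype.card V := Fintype.card_pos
    obtain ⟨v, hv⟩ : ∃ v, v ∉ A := by
      by_contra hcon
      push Not at hcon
      have : A = Finset.univ := Finset.eq_univ_of_forall hcon
      have := hA.1
      rw [‹A = Finset.univ›, Finset.card_univ] at this
      omega
    let B : Finset V := Finset.univ.filter fun u => u ∈ percoComp G x v
    have hB : B.card = compSize G x v := by
      rw [compSize, ← Set.ncard_coe_finset]
      simp [B]
    have hvB : v ∈ B := by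
      simp only [B, Finset.mem_filter, Finset.mem_univ, true_and]
      exact SimpleGraph.Reachable.refl v
    by_contra hcon
    have hle : (A ∪ B).card ≤ A.card + B.card := Finset.card_union_le _ _
    have hv4 := hcomp v
    have := hmax (A ∪ B) ⟨by omega, by
      intro u w huw hu
      rw [Finset.mem_union] at hu ⊢
      rcases hu with hu | hu
      · exact Or.inl (hA.2 u w huw hu)
      · right
        simp only [B, Finset.mem_filter, Finset.mem_univ, true_and] at hu ⊢
        exact SimpleGraph.Reachable.trans (show (percoGraph G x).Reachable v u from hu) huw.reachable⟩
    have hlt : A.card < (A ∪ B).card := Finset.card_lt_card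
      ⟨Finset.subset_union_left, fun hs => hv (hs (Finset.mem_union_right _ hvB))⟩
    omega
  · rintro ⟨e, he⟩ hmem
    simp only [cutEdges, Finset.mem_filter, Finset.mem_univ, true_and] at hmem
    obtain ⟨u, v, hu, hv, rfl⟩ := hmem
    by_contra hx
    refine hv (hA.2 u v ?_ hu)
    rw [percoGraph, SimpleGraph.fromEdgeSet_adj]
    exact ⟨⟨he, by simpa using hx⟩, fun h => hv (h ▸ hu)⟩

theorem bad_bound {V : Type*} [Fintype V] [Nonempty V] (G : SimpleGraph V) (b p : ℝ) (hb : 0 < b)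
    (hG : CheegerGT G b) (hp0 : 1 - (1 / 4 : ℝ) ^ (4 / b) ≤ p) (hp1 : p ≤ 1) :
    1 - (1 / 2 : ℝ) ^ Fintype.card V ≤ probC p {x : G.edgeSet → Bool |
      1 / 4 * (Fintype.card V : ℝ) ≤ (largestComp G x : ℝ)} := by
  classical
  set n := Fintype.card V with hn
  set q0 : ℝ := (1 / 4 : ℝ) ^ (4 / b) with hq0
  have hq0pos : 0 < q0 := by positivity
  have hq0le : q0 ≤ 1 := Real.rpow_le_one (by norm_num) (by norm_num) (by positivity)
  have hp : 0 ≤ p := by linarith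
  rw [probC_eq]
  set w : (G.edgeSet → Bool) → ℝ := fun x => ∏ e, if x e then p else 1 - p with hw
  have hw0 : ∀ x, 0 ≤ w x := fun x => Finset.prod_nonneg fun e _ => by split_ifs <;> linarith
  have htot : ∑ x, w x = 1 := by
    have := sum_closed p (∅ : Finset G.edgeSet)
    have hpi : Fintype.piFinset (fun e : G.edgeSet => if e ∈ (∅ : Finset G.edgeSet) then
        ({false} : Finset Bool) else Finset.univ) = Finset.univ := by
      ext x
      simp only [Fintype.mem_piFinset, Finset.notMem_empty, if_false, Finset.mem_univ, implies_true]
    rw [hpi, Finset.card_empty, pow_zero] at this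
    exact this
  have hsplit := Finset.sum_filter_add_sum_filter_not Finset.univ
    (fun x => x ∈ {x : G.edgeSet → Bool | 1 / 4 * (n : ℝ) ≤ (largestComp G x : ℝ)}) w
  rw [htot] at hsplit
  let T : Finset (Finset V) := Finset.univ.filter fun A => 2 * A.card ≤ n ∧ n < 4 * A.card
  let cl : Finset V → Finset (G.edgeSet → Bool) := fun A =>
    Fintype.piFinset (fun e => if e ∈ cutEdges G A then ({false} : Finset Bool) else Finset.univ)
  have hsub : (Finset.univ.filter fun x => ¬ x ∈ {x : G.edgeSet → Bool |
      1 / 4 * (n : ℝ) ≤ (largestComp G x : ℝ)}) ⊆ T.biUnion cl := by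
    intro x hx
    simp only [Finset.mem_filter, Finset.mem_univ, true_and, Set.mem_ofPred_eq, not_le] at hx
    obtain ⟨A, h1, h2, h3⟩ := exists_cut G x hx
    rw [Finset.mem_biUnion]
    refine ⟨A, by simp only [T, Finset.mem_filter, Finset.mem_univ, true_and]; exact ⟨h1, h2⟩, ?_⟩
    simp only [cl, Fintype.mem_piFinset]
    intro e
    split_ifs with he
    · simpa using h3 e he
    · simp
  have hA : ∀ A ∈ T, ∑ x ∈ cl A, w x ≤ (1 / 4 : ℝ) ^ n := by
    intro A hA
    simp only [T, Finset.mem_filter, Finset.mem_univ, true_and] at hA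
    have h1 : ∑ x ∈ cl A, w x = (1 - p) ^ (cutEdges G A).card := sum_closed p _
    rw [h1]
    have h2 := hG (A : Set V) (by rw [Set.ncard_coe_finset]; omega)
      (by rw [Set.ncard_coe_finset, Nat.card_eq_fintype_card]; omega)
    rw [Set.ncard_coe_finset] at h2
    have h3 : (edgeBoundaryCard G (A : Set V) : ℝ) ≤ ((cutEdges G A).card : ℝ) := by
      exact_mod_cast cutEdges_card G A
    have h4 : (n : ℝ) ≤ 4 * A.card := by exact_mod_cast hA.2.le
    have h5 : b * (n / 4) ≤ ((cutEdges G A).card : ℝ) := by nlinarith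
    calc (1 - p) ^ (cutEdges G A).card ≤ q0 ^ (cutEdges G A).card :=
          pow_le_pow_left₀ (by linarith) (by linarith) _
      _ = q0 ^ ((cutEdges G A).card : ℝ) := (Real.rpow_natCast _ _).symm
      _ ≤ q0 ^ (b * (n / 4) : ℝ) := Real.rpow_le_rpow_of_exponent_ge hq0pos hq0le h5
      _ = (1 / 4 : ℝ) ^ (n : ℝ) := by
          rw [hq0, ← Real.rpow_mul (by norm_num)]
          congr 1
          field_simp
      _ = (1 / 4 : ℝ) ^ n := Real.rpow_natCast _ _
  have hT : (T.card : ℝ) ≤ 2 ^ n := by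
    have : T.card ≤ 2 ^ n := by
      have := Finset.card_le_univ T
      rwa [Fintype.card_finset] at this
    exact_mod_cast this
  have hbad : ∑ x with ¬ x ∈ {x : G.edgeSet → Bool | 1 / 4 * (n : ℝ) ≤ (largestComp G x : ℝ)}, w x
      ≤ (1 / 2 : ℝ) ^ n := by
    calc _ ≤ ∑ x ∈ T.biUnion cl, w x :=
          Finset.sum_le_sum_of_subset_of_nonneg hsub fun x _ _ => hw0 x
      _ ≤ ∑ A ∈ T, ∑ x ∈ cl A, w x := sum_biUnion_le_aux w hw0 T cl
      _ ≤ ∑ A ∈ T, (1 / 4 : ℝ) ^ n := Finset.sum_le_sum hA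
      _ = T.card * (1 / 4 : ℝ) ^ n := by rw [Finset.sum_const, nsmul_eq_mul]
      _ ≤ 2 ^ n * (1 / 4 : ℝ) ^ n := by gcongr
      _ = (1 / 2 : ℝ) ^ n := by rw [← mul_pow]; norm_num
  linarith

/-- there are constants `p₀(b) < 1`, `a(b) > 0` (depending only on `b`) and
`C(b,d) > 0` such that in any `(b,d)`-expander, for all `n` large enough and every
`p ≥ p₀`, `μ_{n,p}(L_n ≥ a |V_n|) ≥ 1 - exp(-C |V_n| / log |V_n|)`. -/
theorem stmt5 (b : ℝ) (hb : 0 < b) :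
    ∃ p0 < (1 : ℝ), ∃ a > (0 : ℝ), ∀ d : ℕ, ∃ C > (0 : ℝ),
      ∀ E : ExpanderSeq b d, ∃ N : ℕ, ∀ n ≥ N, ∀ p : ℝ, p0 ≤ p → p ≤ 1 →
        1 - Real.exp (-C * (Nat.card (E.V n) : ℝ) / Real.log (Nat.card (E.V n))) ≤
          probC p {x : (E.G n).edgeSet → Bool |
            a * (Nat.card (E.V n) : ℝ) ≤ (largestComp (E.G n) x : ℝ)} := by
  refine ⟨1 - (1 / 4 : ℝ) ^ (4 / b), by linarith [show 0 < (1 / 4 : ℝ) ^ (4 / b) by positivity],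
    1 / 4, by norm_num, fun d => ⟨Real.log 2, Real.log_pos (by norm_num), fun E => ?_⟩⟩
  obtain ⟨N, hN⟩ := (E.card_tendsto.eventually_ge_atTop 3).exists_forall_of_atTop
  refine ⟨N, fun n hn p hp0 hp1 => ?_⟩
  have h3 := hN n hn
  have := E.finV n
  have : Fintype (E.V n) := Fintype.ofFinite _
  rw [Nat.card_eq_fintype_card] at h3 ⊢
  have : Nonempty (E.V n) := Fintype.card_pos_iff.mp (by omega)
  refine le_trans ?_ (bad_bound (E.G n) b p hb (E.cheeger_gt n) hp0 hp1)
  have h3' : (3 : ℝ) ≤ Fintype.card (E.V n) := by exact_mod_cast h3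
  set m := Fintype.card (E.V n)
  have hlog : 1 ≤ Real.log (m : ℝ) := by
    rw [Real.le_log_iff_exp_le (by linarith)]
    linarith [Real.exp_one_lt_d9]
  have h2 : (0 : ℝ) < Real.log 2 := Real.log_pos (by norm_num)
  have : (1 / 2 : ℝ) ^ m = Real.exp (-(Real.log 2 * m)) := by
    rw [Real.exp_neg, mul_comm, Real.exp_nat_mul, Real.exp_log (by norm_num)]
    simp
  rw [this]
  have h4 : Real.exp (-(Real.log 2 * m)) ≤ Real.exp (-Real.log 2 * m / Real.log m) := by
    apply Real.exp_le_exp.mpr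
    rw [neg_mul, neg_div]
    apply neg_le_neg
    exact div_le_self (by positivity) hlog
  linarith
end
end
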